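/- Let 𝒜 be a unital C*-algebra, 𝒮 ⊆ 𝒜 an operator system, and n a positive integer. Every positive linear map φ: 𝒮 → M_n(ℂ) is completely positive if and only if the cone 𝒮⁺ ⊗ M_n(ℂ)⁺ is dense in the set of positive elements of M_n(𝒮) (positivity taken in the C*-algebra M_n(𝒜)). -/

import Mathlib

/-!
A linear map `φ : S → Mₙ(ℂ)` is the same thing as its dual functional `s_φ` on `Mₙ(S)`. The values
of `s_φ` at elementary tensors contain the quadratic forms of the matrices `φ(s)`, so `φ` is
positive iff `s_φ ≥ 0` on the cone `S⁺ ⊗ Mₙ(ℂ)⁺`. The quadratic form of `φₘ(s)` at `v ∈ ℂᵐ ⊗ ℂⁿ`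
is the value of `s_φ` at the compression of `s ∈ Mₘ(S)` by the `m × n` matrix `v`, so `φ` is
completely positive iff `s_φ ≥ 0` on `Mₙ(S)⁺`. Thus the theorem is a duality of cones.

Positive maps on an operator system are bounded, so `s_φ ≥ 0` passes to the closure of the cone.
Conversely, a real functional that separates some `t ∈ Mₙ(S)⁺` from this closure, restricted to the
self-adjoint matrices and extended complex-linearly, is the dual functional of a positive map which
is not completely positive.
-/

open scoped ComplexOrder
open Matrix

/-- An element of a star ring is *positive* if it equals `star b * b` for some `b`;
in a (matrix algebra over a) C*-algebra this is the usual notion of positivity. -/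
def IsPosElem {R : Type*} [Ring R] [StarRing R] (x : R) : Prop :=
  ∃ b : R, x = star b * b

variable {A : Type*} [NormedRing A] [StarRing A] [CStarRing A]
  [CompleteSpace A] [NormedAlgebra ℂ A] [StarModule ℂ A]

/-- The canonical image in `Mₘ(𝒜)` of a matrix with entries in the operator system `S`. -/
def matCoe {S : Submodule ℂ A} {m : ℕ} (s : Matrix (Fin m) (Fin m) S) :
    Matrix (Fin m) (Fin m) A :=
  Matrix.of fun j k => (s j k : A)

/-- `J_m(S)`: matrices over `S` which are positive in `Mₘ(𝒜)` together with their
partial transpose. -/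
def memJ {S : Submodule ℂ A} {m : ℕ} (s : Matrix (Fin m) (Fin m) S) : Prop :=
  IsPosElem (matCoe s) ∧ IsPosElem (matCoe s)ᵀ

/-- A map `φ : S → Mₙ(ℂ)` is positive if it sends positive elements of `𝒜` lying in `S`
to positive semidefinite matrices. -/
def IsPosMap {S : Submodule ℂ A} {n : ℕ}
    (φ : S →ₗ[ℂ] Matrix (Fin n) (Fin n) ℂ) : Prop :=
  ∀ s : S, IsPosElem (s : A) → IsPosElem (φ s)

/-- Complete positivity of `φ : S → Mₙ(ℂ)`: every positive matrix over `S` is sent,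
entrywise, to a positive element of `Mₘ(Mₙ(ℂ))`. -/
def IsCPMap {S : Submodule ℂ A} {n : ℕ}
    (φ : S →ₗ[ℂ] Matrix (Fin n) (Fin n) ℂ) : Prop :=
  ∀ (m : ℕ) (s : Matrix (Fin m) (Fin m) S),
    IsPosElem (matCoe s) → IsPosElem (s.map ⇑φ)

/-- `φ` is co-completely positive if `transpose ∘ φ` is completely positive. -/
def IsCoCPMap {S : Submodule ℂ A} {n : ℕ}
    (φ : S →ₗ[ℂ] Matrix (Fin n) (Fin n) ℂ) : Prop :=
  ∀ (m : ℕ) (s : Matrix (Fin m) (Fin m) S),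
    IsPosElem (matCoe s) → IsPosElem (s.map fun a => (φ a)ᵀ)

/-- `φ` is decomposable if it is the sum of a completely positive and a
co-completely positive map. -/
noncomputable def IsDecomposable {S : Submodule ℂ A} {n : ℕ}
    (φ : S →ₗ[ℂ] Matrix (Fin n) (Fin n) ℂ) : Prop :=
  ∃ ψ η : S →ₗ[ℂ] Matrix (Fin n) (Fin n) ℂ,
    IsCPMap ψ ∧ IsCoCPMap η ∧ φ = ψ + η

/-- The dual functional `s_φ` on `Mₙ(S)`, `s_φ([x_{ij}]) = ∑_{i,j} (φ(x_{ij}))_{ij}`. -/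
noncomputable def dualFunc {S : Submodule ℂ A} {n : ℕ}
    (φ : S →ₗ[ℂ] Matrix (Fin n) (Fin n) ℂ)
    (x : Matrix (Fin n) (Fin n) S) : ℂ :=
  ∑ i, ∑ j, φ (x i j) i j

/-- The cone `S⁺ ⊗ Mₙ(ℂ)⁺` inside `Mₙ(𝒜)`: finite sums `∑ sₗ ⊗ xₗ` with `sₗ ∈ S`
positive in `𝒜` and `xₗ` positive semidefinite. -/
def posCone (S : Submodule ℂ A) (n : ℕ) : Set (Matrix (Fin n) (Fin n) A) :=
  { T | ∃ (k : ℕ) (s : Fin k → A) (x : Fin k → Matrix (Fin n) (Fin n) ℂ),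
      (∀ l, s l ∈ S ∧ IsPosElem (s l)) ∧ (∀ l, IsPosElem (x l)) ∧
      T = ∑ l, Matrix.of fun p q => x l p q • s l }

section PositiveElements

theorem IsPosElem.isSelfAdjoint {R : Type*} [Ring R] [StarRing R] {x : R} (hx : IsPosElem x) :
    IsSelfAdjoint x := by
  obtain ⟨b, rfl⟩ := hx
  exact .star_mul_self b

theorem isPosElem_ringEquiv_apply_iff {R R' : Type*} [Ring R] [StarRing R] [Ring R'] [StarRing R']
    (e : R ≃+* R') (he : ∀ b, e (star b) = star (e b)) {x : R} :
    IsPosElem (e x) ↔ IsPosElem x := by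
  rw [IsPosElem, IsPosElem, e.surjective.exists]
  simp_rw [← he, ← map_mul, e.injective.eq_iff]

theorem isPosElem_iff_nonneg {B : Type*} [CStarAlgebra B] [PartialOrder B] [StarOrderedRing B]
    {x : B} : IsPosElem x ↔ 0 ≤ x :=
  CStarAlgebra.nonneg_iff_eq_star_mul_self.symm

theorem IsPosElem.matrix_sum {B ι κ : Type*} [CStarAlgebra B] [Fintype ι] [DecidableEq ι]
    {I : Finset κ} {x : κ → Matrix ι ι B} (hx : ∀ i ∈ I, IsPosElem (x i)) :
    IsPosElem (∑ i ∈ I, x i) := by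
  let := CStarAlgebra.spectralOrder B
  have := CStarAlgebra.spectralOrderedRing B
  -- `CStarMatrix` carries the C*-algebra structure of `Matrix ι ι B`.
  refine (isPosElem_iff_nonneg (B := CStarMatrix ι ι B)).2 (Finset.sum_nonneg fun i hi => ?_)
  exact isPosElem_iff_nonneg.1 (hx i hi)

theorem isPosElem_vecMulVec_star_self {R ι : Type*} [Ring R] [StarRing R] [Fintype ι]
    [DecidableEq ι] (x : ι → R) : IsPosElem (vecMulVec (star x) x) := by
  rcases isEmpty_or_nonempty ι with _ | ⟨⟨i₀⟩⟩
  · exact ⟨0, Subsingleton.elim _ _⟩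
  · refine ⟨Matrix.of (Pi.single i₀ x), ?_⟩
    ext p q
    simp [Matrix.mul_apply, Matrix.star_apply, vecMulVec_apply, Pi.single_apply, apply_ite,
      ite_apply]

theorem isPosElem_conjTranspose_mul_self {B ι κ : Type*} [CStarAlgebra B] [Fintype ι]
    [DecidableEq ι] [Fintype κ] (b : Matrix κ ι B) : IsPosElem (bᴴ * b) := by
  have h_rows : bᴴ * b = ∑ i, vecMulVec (star (b i)) (b i) := by
    ext p q
    simp [Matrix.mul_apply, Matrix.sum_apply, vecMulVec_apply]
  exact h_rows ▸ .matrix_sum fun i _ => isPosElem_vecMulVec_star_self (b i)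

section Complex

variable {ι : Type*} [Fintype ι] {P : Matrix ι ι ℂ}

-- Over `ℂ` a real-valued quadratic form forces the matrix to be Hermitian.
theorem posSemidef_iff_forall_dotProduct_mulVec_nonneg :
    P.PosSemidef ↔ ∀ v, 0 ≤ star v ⬝ᵥ (P *ᵥ v) := by
  classical
  refine ⟨fun hP => hP.dotProduct_mulVec_nonneg, fun h => ?_⟩
  rw [← isPositive_toEuclideanLin_iff, LinearMap.isPositive_iff_complex]
  intro x
  have h_inner : 0 ≤ inner ℂ (P.toEuclideanLin x) x := by
    rw [← inner_conj_symm, EuclideanSpace.inner_eq_star_dotProduct, dotProduct_comm]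
    exact star_nonneg_iff.2 (h x.ofLp)
  exact ⟨(Complex.eq_re_of_ofReal_le h_inner).symm, (Complex.nonneg_iff.1 h_inner).1⟩

variable [DecidableEq ι]

open scoped MatrixOrder Matrix.Norms.L2Operator in
theorem isPosElem_iff_posSemidef : IsPosElem P ↔ P.PosSemidef :=
  isPosElem_iff_nonneg.trans nonneg_iff_posSemidef

theorem isPosElem_comp_iff {κ : Type*} [Fintype κ] [DecidableEq κ]
    {P : Matrix κ κ (Matrix ι ι ℂ)} :
    IsPosElem (Matrix.comp κ κ ι ι ℂ P) ↔ IsPosElem P :=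
  isPosElem_ringEquiv_apply_iff (compRingEquiv κ ι ℂ) fun _ => rfl

end Complex

end PositiveElements

section Continuity

open ComplexStarModule

variable {B C : Type*} [CStarAlgebra B] [CStarAlgebra C] {S : Submodule ℂ B}

theorem norm_apply_le_of_isSelfAdjoint (h_one : (1 : B) ∈ S) {φ : S →ₗ[ℂ] C}
    (hφ : ∀ s : S, IsPosElem (s : B) → IsPosElem (φ s)) {s : S} (hs : IsSelfAdjoint (s : B)) :
    ‖φ s‖ ≤ 3 * ‖φ ⟨1, h_one⟩‖ * ‖s‖ := by
  let := CStarAlgebra.spectralOrder B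
  have := CStarAlgebra.spectralOrderedRing B
  let := CStarAlgebra.spectralOrder C
  have := CStarAlgebra.spectralOrderedRing C
  have h_mono {t : S} (ht : 0 ≤ (t : B)) : 0 ≤ φ t :=
    isPosElem_iff_nonneg.1 (hφ t (isPosElem_iff_nonneg.2 ht))
  -- `0 ≤ u + s ≤ 2u` in `B`, and `φ` preserves both inequalities.
  let u : S := (‖s‖ : ℂ) • ⟨1, h_one⟩
  have hu : (u : B) = algebraMap ℝ B ‖(s : B)‖ := by
    simp [u, Algebra.algebraMap_eq_smul_one]
  have h_lower : 0 ≤ φ (u + s) := h_mono <| by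
    rw [Submodule.coe_add, hu, ← neg_le_iff_add_nonneg']
    exact hs.neg_algebraMap_norm_le_self
  have h_upper : φ (u + s) ≤ φ (u + u) := by
    rw [← sub_nonneg, ← map_sub, add_sub_add_left_eq_sub]
    refine h_mono ?_
    rw [Submodule.coe_sub, hu, sub_nonneg]
    exact hs.le_algebraMap_norm_self
  have h_norm : ‖φ u‖ = ‖φ ⟨1, h_one⟩‖ * ‖s‖ := by
    rw [map_smul, norm_smul, Complex.norm_real, norm_norm, mul_comm]
  calc ‖φ s‖ = ‖φ (u + s) - φ u‖ := by simp
    _ ≤ ‖φ (u + s)‖ + ‖φ u‖ := norm_sub_le _ _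
    _ ≤ ‖φ (u + u)‖ + ‖φ u‖ := by
        gcongr
        exact CStarAlgebra.norm_le_norm_of_nonneg_of_le h_lower h_upper
    _ ≤ ‖φ u‖ + ‖φ u‖ + ‖φ u‖ := by
        rw [map_add]
        gcongr
        exact norm_add_le _ _
    _ = 3 * ‖φ ⟨1, h_one⟩‖ * ‖s‖ := by rw [h_norm]; ring

theorem continuous_of_map_isPosElem (h_one : (1 : B) ∈ S) (h_star : ∀ a ∈ S, star a ∈ S)
    {φ : S →ₗ[ℂ] C} (hφ : ∀ s : S, IsPosElem (s : B) → IsPosElem (φ s)) : Continuous φ := by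
  refine AddMonoidHomClass.continuous_of_bound φ (6 * ‖φ ⟨1, h_one⟩‖) fun s => ?_
  have h_re : (ℜ (s : B) : B) ∈ S := by
    rw [realPart_apply_coe]
    exact S.smul_of_tower_mem _ (S.add_mem s.2 (h_star _ s.2))
  have h_im : (ℑ (s : B) : B) ∈ S := by
    rw [imaginaryPart_apply_coe]
    exact S.smul_mem _ (S.smul_of_tower_mem _ (S.sub_mem s.2 (h_star _ s.2)))
  have h_decomp : s = ⟨_, h_re⟩ + Complex.I • (⟨_, h_im⟩ : S) :=
    Subtype.ext (realPart_add_I_smul_imaginaryPart (s : B)).symm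
  calc ‖φ s‖ = ‖φ ⟨_, h_re⟩ + Complex.I • φ ⟨_, h_im⟩‖ := by
        rw [← map_smul, ← map_add, ← h_decomp]
    _ ≤ ‖φ ⟨_, h_re⟩‖ + ‖φ ⟨_, h_im⟩‖ := by
        refine (norm_add_le _ _).trans_eq ?_
        rw [norm_smul, Complex.norm_I, one_mul]
    _ ≤ 3 * ‖φ ⟨1, h_one⟩‖ * ‖s‖ + 3 * ‖φ ⟨1, h_one⟩‖ * ‖s‖ := by
        gcongr
        · refine (norm_apply_le_of_isSelfAdjoint h_one hφ (s := ⟨_, h_re⟩) (ℜ (s : B)).2).trans ?_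
          gcongr
          exact realPart.norm_le (s : B)
        · refine (norm_apply_le_of_isSelfAdjoint h_one hφ (s := ⟨_, h_im⟩) (ℑ (s : B)).2).trans ?_
          gcongr
          exact imaginaryPart.norm_le (s : B)
    _ = 6 * ‖φ ⟨1, h_one⟩‖ * ‖s‖ := by ring

open scoped Matrix.Norms.L2Operator in
theorem IsPosMap.continuous (h_one : (1 : B) ∈ S) (h_star : ∀ a ∈ S, star a ∈ S) {n : ℕ}
    {φ : S →ₗ[ℂ] Matrix (Fin n) (Fin n) ℂ} (hφ : IsPosMap φ) : Continuous φ :=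
  continuous_of_map_isPosElem h_one h_star hφ

end Continuity

section TensorsAndCompressions

/-- The elementary tensor `s ⊗ x`, viewed as the matrix `[x_{pq} s]` with entries in `M`. -/
def elemTensor {M ι : Type*} [SMul ℂ M] (s : M) (x : Matrix ι ι ℂ) : Matrix ι ι M :=
  x.map (· • s)

theorem isSelfAdjoint_elemTensor {M ι : Type*} [Star M] [SMul ℂ M] [StarModule ℂ M] {s : M}
    {x : Matrix ι ι ℂ} (hs : IsSelfAdjoint s) (hx : IsSelfAdjoint x) :
    IsSelfAdjoint (elemTensor s x) := by
  ext p q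
  rw [Matrix.star_apply, elemTensor, map_apply, map_apply, star_smul, hs.star_eq,
    ← Matrix.star_apply, hx.star_eq]

/-- The compression `w* s w` of a square matrix `s` with entries in a complex vector space by a
rectangular scalar matrix `w`. It is written out entrywise because an operator system has no
product. -/
def compress {M κ ι : Type*} [AddCommMonoid M] [Module ℂ M] [Fintype κ]
    (w : Matrix κ ι ℂ) (s : Matrix κ κ M) : Matrix ι ι M :=
  Matrix.of fun p q => ∑ j, ∑ k, (star (w j p) * w k q) • s j k

theorem compress_one {M ι : Type*} [AddCommMonoid M] [Module ℂ M] [Fintype ι] [DecidableEq ι]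
    (s : Matrix ι ι M) : compress 1 s = s := by
  ext p q
  simp [compress, Matrix.one_apply, apply_ite]

theorem compress_eq_mul {R κ ι : Type*} [Ring R] [StarRing R] [Algebra ℂ R] [StarModule ℂ R]
    [Fintype κ] (w : Matrix κ ι ℂ) (s : Matrix κ κ R) :
    compress w s = (w.map (algebraMap ℂ R))ᴴ * s * w.map (algebraMap ℂ R) := by
  ext p q
  simp only [compress, Matrix.of_apply, Matrix.mul_apply, conjTranspose_apply, map_apply,
    Finset.sum_mul]
  rw [Finset.sum_comm]
  refine Finset.sum_congr rfl fun k _ => Finset.sum_congr rfl fun j _ => ?_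
  rw [← algebraMap_star_comm, ← Algebra.commutes, ← mul_assoc, ← map_mul, Algebra.smul_def,
    mul_comm (w k q)]

theorem isPosElem_compress {B κ ι : Type*} [CStarAlgebra B] [Fintype κ] [DecidableEq κ] [Fintype ι]
    [DecidableEq ι] {s : Matrix κ κ B} (hs : IsPosElem s) (w : Matrix κ ι ℂ) :
    IsPosElem (compress w s) := by
  obtain ⟨b, rfl⟩ := hs
  have h_eq : compress w (star b * b) =
      (b * w.map (algebraMap ℂ B))ᴴ * (b * w.map (algebraMap ℂ B)) := by
    rw [compress_eq_mul, conjTranspose_mul, star_eq_conjTranspose]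
    simp only [Matrix.mul_assoc]
  exact h_eq ▸ isPosElem_conjTranspose_mul_self _

end TensorsAndCompressions

section DualFunctional

variable {B : Type*} [NormedRing B] [NormedAlgebra ℂ B] {S : Submodule ℂ B} {n : ℕ}
  {φ : S →ₗ[ℂ] Matrix (Fin n) (Fin n) ℂ}

theorem matCoe_compress {m : ℕ} (w : Matrix (Fin m) (Fin n) ℂ) (s : Matrix (Fin m) (Fin m) S) :
    matCoe (compress w s) = compress w (matCoe s) := by
  ext p q
  simp [matCoe, compress]

theorem dualFunc_sum {κ : Type*} (I : Finset κ) (x : κ → Matrix (Fin n) (Fin n) S) :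
    dualFunc φ (∑ l ∈ I, x l) = ∑ l ∈ I, dualFunc φ (x l) := by
  simp only [dualFunc, Matrix.sum_apply, map_sum]
  rw [Finset.sum_comm_cycle]

theorem dualFunc_elemTensor (s : S) (x : Matrix (Fin n) (Fin n) ℂ) :
    dualFunc φ (elemTensor s x) = (x * (φ s)ᵀ).trace := by
  simp [dualFunc, elemTensor, Matrix.trace, Matrix.mul_apply]

theorem dualFunc_compress {m : ℕ} (w : Matrix (Fin m) (Fin n) ℂ)
    (s : Matrix (Fin m) (Fin m) S) :
    dualFunc φ (compress w s) =
      star (Function.uncurry w) ⬝ᵥ (Matrix.comp _ _ _ _ ℂ (s.map φ) *ᵥ Function.uncurry w) := by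
  simp only [dualFunc, compress, Matrix.of_apply, map_sum, map_smul, Matrix.sum_apply,
    Matrix.smul_apply, smul_eq_mul, dotProduct, mulVec, Fintype.sum_prod_type, map_apply,
    Pi.star_apply, Matrix.comp_apply, Finset.mul_sum]
  calc
    _ = ∑ p, ∑ j, ∑ q, ∑ k, star (w j p) * w k q * φ (s j k) p q :=
      Finset.sum_congr rfl fun _ _ => Finset.sum_comm
    _ = ∑ j, ∑ p, ∑ k, ∑ q, star (w j p) * w k q * φ (s j k) p q := by
      rw [Finset.sum_comm]
      exact Finset.sum_congr rfl fun _ _ => Finset.sum_congr rfl fun _ _ => Finset.sum_comm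
    _ = _ := by simp only [Function.uncurry, star, mul_assoc, mul_comm (w _ _)]

variable [StarRing B]

theorem isPosMap_iff_dualFunc_elemTensor_nonneg :
    IsPosMap φ ↔ ∀ s : S, IsPosElem (s : B) → ∀ x, IsPosElem x →
      0 ≤ dualFunc φ (elemTensor s x) := by
  refine forall₂_congr fun s _ => ?_
  rw [isPosElem_iff_posSemidef]
  simp_rw [dualFunc_elemTensor]
  constructor
  · rintro hs _ ⟨b, rfl⟩
    rw [star_eq_conjTranspose, ← trace_mul_cycle]
    exact (hs.transpose.mul_mul_conjTranspose_same b).trace_nonneg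
  · intro h
    refine posSemidef_iff_forall_dotProduct_mulVec_nonneg.2 fun v => ?_
    have h_quad : (vecMulVec (star v) v * (φ s)ᵀ).trace = star v ⬝ᵥ (φ s *ᵥ v) := by
      rw [vecMulVec_mul, trace_vecMulVec, vecMul_transpose]
    exact h_quad ▸ h _ (isPosElem_vecMulVec_star_self v)

end DualFunctional

section CompletePositivity

variable {B : Type*} {n : ℕ}

theorem isPosElem_map_iff_dualFunc_compress_nonneg [NormedRing B] [NormedAlgebra ℂ B]
    {S : Submodule ℂ B} {φ : S →ₗ[ℂ] Matrix (Fin n) (Fin n) ℂ} {m : ℕ}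
    {s : Matrix (Fin m) (Fin m) S} :
    IsPosElem (s.map φ) ↔ ∀ w : Matrix (Fin m) (Fin n) ℂ, 0 ≤ dualFunc φ (compress w s) := by
  rw [← isPosElem_comp_iff, isPosElem_iff_posSemidef,
    posSemidef_iff_forall_dotProduct_mulVec_nonneg, (Equiv.curry _ _ _).forall_congr_left]
  simp_rw [dualFunc_compress]
  rfl

theorem isCPMap_iff_dualFunc_nonneg [CStarAlgebra B] {S : Submodule ℂ B}
    {φ : S →ₗ[ℂ] Matrix (Fin n) (Fin n) ℂ} :
    IsCPMap φ ↔ ∀ t : Matrix (Fin n) (Fin n) S, IsPosElem (matCoe t) → 0 ≤ dualFunc φ t := by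
  constructor
  · intro h t ht
    simpa only [compress_one] using isPosElem_map_iff_dualFunc_compress_nonneg.1 (h n t ht) 1
  · refine fun h m s hs => isPosElem_map_iff_dualFunc_compress_nonneg.2 fun w => h _ ?_
    rw [matCoe_compress]
    exact isPosElem_compress hs w

end CompletePositivity

section Density

variable {B : Type*} {n : ℕ}

theorem isInducing_matCoe [NormedRing B] [NormedAlgebra ℂ B] {S : Submodule ℂ B} :
    Topology.IsInducing (matCoe : Matrix (Fin n) (Fin n) S → Matrix (Fin n) (Fin n) B) :=
  .piMap fun _ => .piMap fun _ => .subtypeVal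

theorem IsPosMap.posCone_subset_image_matCoe [NormedRing B] [StarRing B] [NormedAlgebra ℂ B]
    {S : Submodule ℂ B} {φ : S →ₗ[ℂ] Matrix (Fin n) (Fin n) ℂ} (hφ : IsPosMap φ) :
    posCone S n ⊆ matCoe '' {t | 0 ≤ dualFunc φ t} := by
  rintro _ ⟨k, s, x, hs, hx, rfl⟩
  refine ⟨∑ l, elemTensor ⟨s l, (hs l).1⟩ (x l), ?_, ?_⟩
  · rw [Set.mem_ofPred_eq, dualFunc_sum]
    exact Finset.sum_nonneg fun l _ =>
      isPosMap_iff_dualFunc_elemTensor_nonneg.1 hφ _ (hs l).2 _ (hx l)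
  · ext p q
    simp [matCoe, elemTensor, Matrix.sum_apply]

theorem IsPosMap.dualFunc_nonneg_of_mem_closure [CStarAlgebra B] {S : Submodule ℂ B}
    {φ : S →ₗ[ℂ] Matrix (Fin n) (Fin n) ℂ} (hφ : IsPosMap φ) (h_one : (1 : B) ∈ S)
    (h_star : ∀ a ∈ S, star a ∈ S) {t : Matrix (Fin n) (Fin n) S}
    (ht : matCoe t ∈ closure (posCone S n)) : 0 ≤ dualFunc φ t := by
  have h_cont : Continuous (dualFunc φ) :=
    continuous_finsetSum _ fun i _ => continuous_finsetSum _ fun j _ =>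
      ((hφ.continuous h_one h_star).matrix_elem i j).comp (continuous_id.matrix_elem i j)
  have h_mem : t ∈ closure {t | 0 ≤ dualFunc φ t} := by
    rw [isInducing_matCoe.closure_eq_preimage_closure_image]
    exact closure_mono hφ.posCone_subset_image_matCoe ht
  exact (isClosed_Ici.preimage h_cont).closure_subset h_mem

end Density

section ConeSeparation

variable {B : Type*} [NormedRing B] [StarRing B] [NormedAlgebra ℂ B] {S : Submodule ℂ B} {n : ℕ}

/-- The cone `S⁺ ⊗ Mₙ(ℂ)⁺` bundled as a pointed cone, to which the separation theorem for
proper cones applies. -/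
noncomputable def posPointedCone (S : Submodule ℂ B) (n : ℕ) :
    PointedCone ℝ (Matrix (Fin n) (Fin n) B) :=
  .hull ℝ {T | ∃ s ∈ S, IsPosElem s ∧ ∃ x, IsPosElem x ∧ T = elemTensor s x}

theorem elemTensor_mem_posPointedCone {s : B} (hsS : s ∈ S) (hs : IsPosElem s)
    {x : Matrix (Fin n) (Fin n) ℂ} (hx : IsPosElem x) : elemTensor s x ∈ posPointedCone S n :=
  Submodule.subset_span ⟨s, hsS, hs, x, hx, rfl⟩

theorem coe_posPointedCone : (posPointedCone S n : Set _) = posCone S n := by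
  refine Set.Subset.antisymm (fun T hT => ?_) ?_
  · obtain ⟨k, c, T', rfl⟩ := Submodule.mem_span_set'.1 hT
    choose s hsS hs x hx hT' using fun l => (T' l).2
    refine ⟨k, s, fun l => (c l : ℝ) • x l, fun l => ⟨hsS l, hs l⟩, fun l => ?_, ?_⟩
    · exact isPosElem_iff_posSemidef.2 ((isPosElem_iff_posSemidef.1 (hx l)).smul (c l).2)
    · simp_rw [hT']
      ext p q
      simp [elemTensor, Matrix.sum_apply]
  · rintro _ ⟨k, s, x, hs, hx, rfl⟩
    exact Submodule.sum_mem _ fun l _ =>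
      elemTensor_mem_posPointedCone (hs l).1 (hs l).2 (hx l)

theorem exists_nonneg_neg_of_notMem_closure_posCone {T : Matrix (Fin n) (Fin n) B}
    (hT : T ∉ closure (posCone S n)) :
    ∃ f : Matrix (Fin n) (Fin n) B →ₗ[ℝ] ℝ, (∀ U ∈ posCone S n, 0 ≤ f U) ∧ f T < 0 := by
  have : LocallyConvexSpace ℝ (Matrix (Fin n) (Fin n) B) :=
    inferInstanceAs (LocallyConvexSpace ℝ (Fin n → Fin n → B))
  have : IsTopologicalAddGroup (Matrix (Fin n) (Fin n) B) :=
    inferInstanceAs (IsTopologicalAddGroup (Fin n → Fin n → B))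
  have : ContinuousSMul ℝ (Matrix (Fin n) (Fin n) B) :=
    inferInstanceAs (ContinuousSMul ℝ (Fin n → Fin n → B))
  rw [← coe_posPointedCone] at hT ⊢
  obtain ⟨f, hf, hfT⟩ :=
    ProperCone.hyperplane_separation_point (Submodule.closure (posPointedCone S n)) hT
  exact ⟨f, fun U hU => hf U (subset_closure hU), hfT⟩

end ConeSeparation

section ComplexExtension

open ComplexStarModule

variable {E : Type*} [AddCommGroup E] [StarAddMonoid E] [Module ℂ E] [StarModule ℂ E]

/-- The complex-linear extension to `E` of a real functional on the self-adjoint elements. -/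
noncomputable def complexExtend (f : selfAdjoint E →ₗ[ℝ] ℝ) : E →ₗ[ℂ] ℂ where
  toFun X := f (ℜ X) + f (ℑ X) * Complex.I
  map_add' X Y := by
    simp only [map_add, Complex.ofReal_add]
    ring
  map_smul' c X := by
    apply Complex.ext <;> simp [realPart_smul, imaginaryPart_smul]

theorem complexExtend_apply_coe (f : selfAdjoint E →ₗ[ℝ] ℝ) (X : selfAdjoint E) :
    complexExtend f X = f X := by
  simp [complexExtend]

end ComplexExtension

section SeparatingMap

variable {B : Type*} [NormedRing B] [NormedAlgebra ℂ B] {S : Submodule ℂ B} {n : ℕ}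

/-- The linear map `S → Mₙ(ℂ)` whose dual functional is the restriction to `Mₙ(S)` of a given
linear functional on `Mₙ(𝒜)`. -/
noncomputable def ofFunctional (S : Submodule ℂ B) (F : Matrix (Fin n) (Fin n) B →ₗ[ℂ] ℂ) :
    S →ₗ[ℂ] Matrix (Fin n) (Fin n) ℂ :=
  LinearMap.pi fun p => LinearMap.pi fun q =>
    F ∘ₗ Matrix.singleLinearMap ℂ p q ∘ₗ S.subtype

theorem dualFunc_ofFunctional (F : Matrix (Fin n) (Fin n) B →ₗ[ℂ] ℂ)
    (t : Matrix (Fin n) (Fin n) S) : dualFunc (ofFunctional S F) t = F (matCoe t) := by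
  rw [matrix_eq_sum_single (matCoe t)]
  simp only [map_sum]
  rfl

variable [StarRing B] [StarModule ℂ B]

theorem exists_isPosMap_dualFunc_neg {t : Matrix (Fin n) (Fin n) S} (ht : IsPosElem (matCoe t))
    (ht_cone : matCoe t ∉ closure (posCone S n)) :
    ∃ φ : S →ₗ[ℂ] Matrix (Fin n) (Fin n) ℂ, IsPosMap φ ∧ dualFunc φ t < 0 := by
  obtain ⟨f, hf, hft⟩ := exists_nonneg_neg_of_notMem_closure_posCone ht_cone
  let φ := ofFunctional S (complexExtend (f ∘ₗ (selfAdjoint.submodule ℝ _).subtype))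
  have h_dual {u : Matrix (Fin n) (Fin n) S} (hu : IsSelfAdjoint (matCoe u)) :
      dualFunc φ u = f (matCoe u) := by
    rw [dualFunc_ofFunctional]
    exact complexExtend_apply_coe _ ⟨matCoe u, hu⟩
  refine ⟨φ, isPosMap_iff_dualFunc_elemTensor_nonneg.2 fun s hs x hx => ?_, ?_⟩
  · rw [h_dual (u := elemTensor s x)
      (isSelfAdjoint_elemTensor hs.isSelfAdjoint hx.isSelfAdjoint), Complex.zero_le_real]
    exact hf _ (coe_posPointedCone.subset (elemTensor_mem_posPointedCone s.2 hs hx))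
  · rw [h_dual ht.isSelfAdjoint]
    exact_mod_cast hft

end SeparatingMap

/-- every positive map `φ : S → Mₙ(ℂ)` is completely positive iff the
cone `S⁺ ⊗ Mₙ(ℂ)⁺` is dense in the positive elements of `Mₙ(S)`. -/
theorem every_posMap_cp_iff
    (S : Submodule ℂ A) (h_one : (1 : A) ∈ S) (h_star : ∀ a ∈ S, star a ∈ S)
    (n : ℕ) (hn : 0 < n) :
    (∀ φ : S →ₗ[ℂ] Matrix (Fin n) (Fin n) ℂ, IsPosMap φ → IsCPMap φ) ↔
      (∀ s : Matrix (Fin n) (Fin n) S, IsPosElem (matCoe s) →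
        matCoe s ∈ closure (posCone S n)) := by
  let : CStarAlgebra A := {}
  constructor
  · intro h_cp s hs
    by_contra hs_cone
    obtain ⟨φ, hφ, hφs⟩ := exists_isPosMap_dualFunc_neg hs hs_cone
    exact hφs.not_ge (isCPMap_iff_dualFunc_nonneg.1 (h_cp φ hφ) s hs)
  · intro h_dense φ hφ
    exact isCPMap_iff_dualFunc_nonneg.2 fun t ht =>
      hφ.dualFunc_nonneg_of_mem_closure h_one h_star (h_dense t ht)
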